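/- Under the convexity assumptions $C_{-1} > 2C_0$, $C_{g-1} > 2C_g$, and $C_i + C_{i+2} > 2C_{i+1}$ for $i=0,\ldots,g-2$ (with $C_{g+1}:=0$), the tropical curve $\tilde\Gamma$ defined by $F(X,Y) = \min(2Y, Y + \min_{0\le i\le g+1}(C_i + iX'), C_{-1})$ is symmetric under the involution $\iota(X,Y) = (X, C_{-1}-Y)$: a point $P$ lies on $\tilde\Gamma$ if and only if $\iota(P)$ lies on $\tilde\Gamma$. -/

import Mathlib

open Finset

/-- The tropical polynomial `F` defining the spectral curve of the pBBS, with the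
convention `C (g+1) = 0`. -/
noncomputable def Ftrop (g : ℕ) (Cm1 : ℝ) (C : ℕ → ℝ) : ℝ × ℝ → ℝ :=
  fun p =>
    min (min (2 * p.2)
      (p.2 + (Finset.range (g + 2)).inf'
        (Finset.nonempty_range_iff.mpr (by omega)) (fun k => C k + k * p.1))) Cm1

theorem Ftrop_flip (g : ℕ) (Cm1 : ℝ) (C : ℕ → ℝ) (q : ℝ × ℝ) :
    Ftrop g Cm1 C q = Ftrop g Cm1 C (q.1, Cm1 - q.2) + (2 * q.2 - Cm1) := by
  unfold Ftrop
  dsimp only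
  generalize (Finset.range (g + 2)).inf' _ (fun k => C k + (k : ℝ) * q.1) = m
  simp only [← min_add_add_right]
  rw [show 2 * (Cm1 - q.2) + (2 * q.2 - Cm1) = Cm1 by ring,
    show Cm1 - q.2 + m + (2 * q.2 - Cm1) = q.2 + m by ring,
    show Cm1 + (2 * q.2 - Cm1) = 2 * q.2 by ring, min_comm, min_comm (2 * q.2), min_assoc]

theorem Ftrop_diff_flip (g : ℕ) (Cm1 : ℝ) (C : ℕ → ℝ) (P : ℝ × ℝ)
    (h : DifferentiableAt ℝ (Ftrop g Cm1 C) (P.1, Cm1 - P.2)) :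
    DifferentiableAt ℝ (Ftrop g Cm1 C) P := by
  have e : Ftrop g Cm1 C =
      fun q => (Ftrop g Cm1 C ∘ fun q : ℝ × ℝ => (q.1, Cm1 - q.2)) q + (2 * q.2 - Cm1) :=
    funext (Ftrop_flip g Cm1 C)
  have hi : DifferentiableAt ℝ (fun q : ℝ × ℝ => (q.1, Cm1 - q.2)) P := by fun_prop
  have hc := DifferentiableAt.comp P (g := Ftrop g Cm1 C) h hi
  rw [e]
  exact hc.add (by fun_prop)

/-- the tropical spectral curve is symmetric under the involution
`ι(X,Y) = (X, C₋₁ - Y)`: `P` is a non-differentiability point of `F` iff `ι(P)` is. -/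
theorem tropical_spectral_curve_symmetric
    (g : ℕ) (Cm1 : ℝ) (C : ℕ → ℝ)
    (hCtop : C (g + 1) = 0)
    (h1 : Cm1 > 2 * C 0)
    (h2 : C (g - 1) > 2 * C g)
    (h3 : ∀ i, i + 2 ≤ g → C i + C (i + 2) > 2 * C (i + 1)) :
    ∀ P : ℝ × ℝ,
      ¬ DifferentiableAt ℝ (Ftrop g Cm1 C) P ↔
      ¬ DifferentiableAt ℝ (Ftrop g Cm1 C) (P.1, Cm1 - P.2) := by
  intro P
  refine not_congr ⟨fun h => Ftrop_diff_flip g Cm1 C _ ?_, Ftrop_diff_flip g Cm1 C P⟩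
  simpa using h
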